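/- arXiv:1104.0880 — 3 statements merged into one kernel-verified Lean document; each statement's English description precedes it below -/
import Mathlib

section
/- Define Ω₂(γ,K) := J⁻¹K + m·r²·((K·J⁻¹γ)/(‖γ‖² − m·r²·(γ·J⁻¹γ)))·J⁻¹γ and c₂(γ,K) := m·r²·(Ω₂(γ,K)·γ). Then at every point (γ,K) with ‖γ‖ = 1 and for every covector (p,q) ∈ ℝ³×ℝ³ the following vector identity in ℝ³×ℝ³ holds: (γ×q, (K − c₂·γ)×q + γ×p) = (γ×q, K×q + γ×(p + c₂·(γ×(γ×q)))). In other words, the Hamiltonian vector of the covector (p,q) for the bracket {·,·}'_Rank2 (coefficient a = K − c₂·γ) equals the Lie–Poisson (𝔰𝔢(3)*) Hamiltonian vector (coefficient a = K) of the gauge-shifted covector (p + c₂·γ×(γ×q), q), where the shift is contraction of the vector (γ×q, ·) with the 2-form 𝓑 given at (γ,K) by 𝓑((u,v),(u',v')) := c₂·γ·(u×u'). Hence on the reduced space {‖γ‖ = 1} the gauge transformation by 𝓑 = m·r²·(Ω₂·γ)·σ (σ the area form of the sphere) carries the graph of the Rank-2' bivector onto the graph of the Lie–Poisson bivector of 𝔰𝔢(3)*;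 this is the gauge relation underlying the theorem that the reduced Chaplygin-sphere bracket is twisted Poisson. -/
/-!
The dependence on the inertia tensor enters only through the scalar `c = c2 m r I1 I2 I3 γ K`, whose
value is irrelevant. By linearity of the cross product, the claim reduces to
`γ × (γ × (γ × q)) = -(γ × q)` for a unit vector `γ` (`cross_cross_cross_of_unit`): the operator
`γ × ·` squares to minus the identity on the tangent plane of the sphere at `γ`.
-/

open Matrix

noncomputable section

/-- Phase space factor `ℝ³`. -/
abbrev R3 : Type := Fin 3 → ℝ

/-- The inverse of `J = 𝕀 + m r² E`, acting on ℝ³. -/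
def Jinv (m r I1 I2 I3 : ℝ) : Matrix (Fin 3) (Fin 3) ℝ :=
  Matrix.diagonal ![(I1 + m*r^2)⁻¹, (I2 + m*r^2)⁻¹, (I3 + m*r^2)⁻¹]

/-- `Ω₂(γ,K) = J⁻¹K + m r² ((K·J⁻¹γ)/(‖γ‖² − m r² (γ·J⁻¹γ))) J⁻¹γ`. -/
noncomputable def Omega2 (m r I1 I2 I3 : ℝ) (γ K : R3) : R3 :=
  Jinv m r I1 I2 I3 *ᵥ K +
    (m*r^2*((K ⬝ᵥ (Jinv m r I1 I2 I3 *ᵥ γ)) /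
      (γ ⬝ᵥ γ - m*r^2*(γ ⬝ᵥ (Jinv m r I1 I2 I3 *ᵥ γ))))) •
      (Jinv m r I1 I2 I3 *ᵥ γ)

/-- `c₂(γ,K) = m r² (Ω₂(γ,K)·γ)`. -/
noncomputable def c2 (m r I1 I2 I3 : ℝ) (γ K : R3) : ℝ :=
  m*r^2*(Omega2 m r I1 I2 I3 γ K ⬝ᵥ γ)

theorem cross_cross_cross_of_unit (γ q : R3) (hγ : γ ⬝ᵥ γ = 1) :
    crossProduct γ (crossProduct γ (crossProduct γ q)) = -crossProduct γ q := by
  have key : crossProduct γ (crossProduct γ (crossProduct γ q)) =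
      -((γ ⬝ᵥ γ) • crossProduct γ q) := by
    ext i
    fin_cases i <;> simp [cross_apply, dotProduct, Fin.sum_univ_three] <;> ring
  rw [key, hγ, one_smul]

/-- On the unit sphere `‖γ‖ = 1`, the Hamiltonian vector of a covector `(p,q)` for the
bracket with coefficient `a = K − c₂·γ` (the bracket `{·,·}'_Rank2`) coincides with the
Lie–Poisson (𝔰𝔢(3)*) Hamiltonian vector of the gauge-shifted covector
`(p + c₂·γ×(γ×q), q)`: the gauge transformation by the 2-form `𝓑 = m r² (Ω₂·γ) σ`
carries the Rank-2' bivector onto the Lie–Poisson bivector. -/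
theorem stmt12 (m r I1 I2 I3 : ℝ) (hm : 0 < m) (hr : 0 < r)
    (h1 : 0 < I1) (h2 : 0 < I2) (h3 : 0 < I3)
    (γ K p q : R3) (hγ : γ ⬝ᵥ γ = 1) :
    ((crossProduct γ q,
        crossProduct (K - c2 m r I1 I2 I3 γ K • γ) q + crossProduct γ p) : R3 × R3) =
      (crossProduct γ q,
        crossProduct K q +
          crossProduct γ (p + c2 m r I1 I2 I3 γ K • crossProduct γ (crossProduct γ q))) := by
  simp only [map_sub, map_add, map_smul, LinearMap.sub_apply, LinearMap.smul_apply,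
    cross_cross_cross_of_unit γ q hγ, smul_neg]
  congr 1
  abel

end
end

section
/- Define Ω₁(γ,K) := 𝕀⁻¹K − m·r²·((K·𝕀⁻¹γ)/(‖γ‖² + m·r²·(γ·𝕀⁻¹γ)))·𝕀⁻¹γ for γ ≠ 0 and c₁(γ,K) := m·r²·(Ω₁(γ,K)·γ). Then at every point (γ,K) with ‖γ‖ = 1 and for every covector (p,q) ∈ ℝ³×ℝ³ the following vector identity in ℝ³×ℝ³ holds: (γ×q, (K + c₁·γ)×q + γ×p) = (γ×q, K×q + γ×(p − c₁·(γ×(γ×q)))). In other words, the Hamiltonian vector of the covector (p,q) for the bracket {·,·}_Rank1 (coefficient a = K + c₁·γ) equals the Lie–Poisson (𝔰𝔢(3)*) Hamiltonian vector (coefficient a = K) of the covector shifted by contraction with the 2-form −𝓑, where 𝓑((u,v),(u',v')) := c₁·γ·(u×u'). Hence on the reduced space {‖γ‖ = 1} the Rank-1 bracket is gauge related to the Lie–Poisson bracket of 𝔰𝔢(3)* via (a sign of) the 2-form 𝓑 = m·r²·(Ω₁·γ)·σ (σ the area form of the sphere); this is the gauge relation underlying the theorem that the Rank-1 bracket is twisted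 Poisson. -/
open Matrix

noncomputable section

/-- The inverse of the inertia tensor `𝕀 = diag(I₁,I₂,I₃)`, acting on ℝ³. -/
def Iinv (I1 I2 I3 : ℝ) : Matrix (Fin 3) (Fin 3) ℝ :=
  Matrix.diagonal ![I1⁻¹, I2⁻¹, I3⁻¹]

/-- `Ω₁(γ,K) = 𝕀⁻¹K − m r² ((K·𝕀⁻¹γ)/(‖γ‖² + m r² (γ·𝕀⁻¹γ))) 𝕀⁻¹γ`. -/
noncomputable def Omega1 (m r I1 I2 I3 : ℝ) (γ K : R3) : R3 :=
  Iinv I1 I2 I3 *ᵥ K -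
    (m*r^2*((K ⬝ᵥ (Iinv I1 I2 I3 *ᵥ γ)) /
      (γ ⬝ᵥ γ + m*r^2*(γ ⬝ᵥ (Iinv I1 I2 I3 *ᵥ γ))))) •
      (Iinv I1 I2 I3 *ᵥ γ)

/-- `c₁(γ,K) = m r² (Ω₁(γ,K)·γ)`. -/
noncomputable def c1 (m r I1 I2 I3 : ℝ) (γ K : R3) : ℝ :=
  m*r^2*(Omega1 m r I1 I2 I3 γ K ⬝ᵥ γ)

/-- Crossing three times with `γ` is `-‖γ‖²` times crossing once, since `γ × q` is orthogonal
to `γ`. -/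
theorem cross_cross_cross_self (γ q : R3) :
    crossProduct γ (crossProduct γ (crossProduct γ q)) = -((γ ⬝ᵥ γ) • crossProduct γ q) := by
  rw [cross_cross_eq_smul_sub_smul', dot_self_cross, zero_smul, zero_sub]

/-- On the unit sphere `‖γ‖ = 1`, the Hamiltonian vector of a covector `(p,q)` for the
bracket with coefficient `a = K + c₁·γ` (the bracket `{·,·}_Rank1`) coincides with the
Lie–Poisson (𝔰𝔢(3)*) Hamiltonian vector of the covector shifted by contraction with
`−𝓑`, where `𝓑 = m r² (Ω₁·γ) σ`: the Rank-1 bracket is gauge related to the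
Lie–Poisson bracket of 𝔰𝔢(3)*. -/
theorem stmt13 (m r I1 I2 I3 : ℝ) (hm : 0 < m) (hr : 0 < r)
    (h1 : 0 < I1) (h2 : 0 < I2) (h3 : 0 < I3)
    (γ K p q : R3) (hγ : γ ⬝ᵥ γ = 1) :
    ((crossProduct γ q,
        crossProduct (K + c1 m r I1 I2 I3 γ K • γ) q + crossProduct γ p) : R3 × R3) =
      (crossProduct γ q,
        crossProduct K q +
          crossProduct γ (p - c1 m r I1 I2 I3 γ K • crossProduct γ (crossProduct γ q))) := by
  have h := cross_cross_cross_self γ q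
  rw [hγ, one_smul] at h
  simp only [map_add, map_sub, map_smul, LinearMap.add_apply, LinearMap.smul_apply, h, smul_neg,
    sub_neg_eq_add, Prod.mk.injEq, true_and]
  abel

end
end

section
/- Let G₁(γ) := 𝕀 + m·r²·γγᵀ (invertible for every γ ∈ ℝ³), set Ω(γ,K) := G₁(γ)⁻¹·K, and define the reduced Hamiltonian H(γ,K) := (1/2)·K·Ω(γ,K). Consider the two brackets of the rank-1 generalized rolling problem: {·,·}_Rank1 := {·,·}_a with a(γ,K) := K + m·r²·(Ω·γ)·γ, and {·,·}'_Rank1 := {·,·}_{a'} with a'(γ,K) := K − m·r²·Ω + m·r²·(Ω·γ)·γ. Then both brackets define the reduced equations of motion: for every smooth f : ℝ³×ℝ³ → ℝ and every point (γ,K), {f, H}_Rank1 = {f, H}'_Rank1 = (∂f/∂γ)·(γ×Ω) + (∂f/∂K)·(K×Ω); equivalently, the Hamiltonian vector field of H for either bracket is (γ×Ω, K×Ω), i.e. the vector field of the reduced system γ' = γ×Ω, K' = K×Ω. -/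
/-!
Differentiating `G₁(γ) Ω = K` in a direction `(v, k)` gives
`G₁ Ω' = k - m r² ((γ·Ω) v + (v·Ω) γ)`. Since `G₁` is symmetric, `K·Ω' = Ω·(G₁ Ω')`, so
`dH(v, k) = Ω·k - m r² (γ·Ω) (Ω·v)`; that is, `∂H/∂K = Ω` (`gradK_HredR1`) and
`∂H/∂γ = -m r² (Ω·γ) Ω` (`gradG_HredR1`). In `a × Ω + γ × ∂H/∂γ` the terms in `γ × Ω` then cancel,
and the additional term `-m r² Ω` of `a'` is killed by `Ω × Ω = 0`. The bracket formulas follow from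
`{f, H}_a = f_γ·X_γ + f_K·X_K`, where `(X_γ, X_K)` is the Hamiltonian vector field
(`nhBracket_eq_hamVF`).

Differentiability of `Ω` comes from the Sherman–Morrison formula (`OmgR1_apply`).
-/

open Matrix

noncomputable section

/-- The ℝ³-valued gradient `∂f/∂γ` (γ is the first factor of the phase space). -/
noncomputable def gradG (f : R3 × R3 → ℝ) (p : R3 × R3) : R3 :=
  fun i => fderiv ℝ f p (Pi.single i 1, 0)

/-- The ℝ³-valued gradient `∂f/∂K` (K is the second factor of the phase space). -/
noncomputable def gradK (f : R3 × R3 → ℝ) (p : R3 × R3) : R3 :=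
  fun i => fderiv ℝ f p (0, Pi.single i 1)

/-- The bracket `{f,g}_a = −a·(f_K × g_K) − γ·(f_K × g_γ − g_K × f_γ)`. -/
noncomputable def nhBracket (a : R3 × R3 → R3) (f g : R3 × R3 → ℝ) (p : R3 × R3) : ℝ :=
  -(a p ⬝ᵥ crossProduct (gradK f p) (gradK g p)) -
    p.1 ⬝ᵥ (crossProduct (gradK f p) (gradG g p) - crossProduct (gradK g p) (gradG f p))

/-- The Hamiltonian vector field `X^a_g = (γ × g_K, a × g_K + γ × g_γ)`. -/
noncomputable def hamVF (a : R3 × R3 → R3) (g : R3 × R3 → ℝ) (p : R3 × R3) : R3 × R3 :=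
  (crossProduct p.1 (gradK g p), crossProduct (a p) (gradK g p) + crossProduct p.1 (gradG g p))

/-- The Lie bracket of vector fields `[X,Y](p) = DY(p)(X(p)) − DX(p)(Y(p))`. -/
noncomputable def lieB (X Y : R3 × R3 → R3 × R3) (p : R3 × R3) : R3 × R3 :=
  fderiv ℝ Y p (X p) - fderiv ℝ X p (Y p)

/-- `G₁(γ) = 𝕀 + m r² γγᵀ`. -/
def G1 (m r I1 I2 I3 : ℝ) (γ : R3) : Matrix (Fin 3) (Fin 3) ℝ :=
  Matrix.diagonal ![I1, I2, I3] + (m*r^2) • Matrix.vecMulVec γ γ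

/-- The angular velocity `Ω(γ,K) = G₁(γ)⁻¹ K` of the rank-1 problem. -/
noncomputable def OmgR1 (m r I1 I2 I3 : ℝ) (p : R3 × R3) : R3 :=
  (G1 m r I1 I2 I3 p.1)⁻¹ *ᵥ p.2

/-- The reduced Hamiltonian `H(γ,K) = ½ K·Ω(γ,K)`. -/
noncomputable def HredR1 (m r I1 I2 I3 : ℝ) (p : R3 × R3) : ℝ :=
  (1/2) * (p.2 ⬝ᵥ OmgR1 m r I1 I2 I3 p)

/-- The coefficient `a(γ,K) = K + m r² (Ω·γ) γ` of the bracket `{·,·}_Rank1`. -/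
noncomputable def aR1 (m r I1 I2 I3 : ℝ) (p : R3 × R3) : R3 :=
  p.2 + (m*r^2*(OmgR1 m r I1 I2 I3 p ⬝ᵥ p.1)) • p.1

/-- The coefficient `a'(γ,K) = K − m r² Ω + m r² (Ω·γ) γ` of the bracket `{·,·}'_Rank1`. -/
noncomputable def aR1' (m r I1 I2 I3 : ℝ) (p : R3 × R3) : R3 :=
  p.2 - (m*r^2) • OmgR1 m r I1 I2 I3 p + (m*r^2*(OmgR1 m r I1 I2 I3 p ⬝ᵥ p.1)) • p.1

lemma sherman_denom_pos {c I1 I2 I3 : ℝ} (hc : 0 < c) (h1 : 0 < I1) (h2 : 0 < I2) (h3 : 0 < I3)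
    (γ : R3) : 0 < 1 + c * (γ 0 ^ 2 / I1 + γ 1 ^ 2 / I2 + γ 2 ^ 2 / I3) := by
  positivity

lemma isUnit_G1 {m r I1 I2 I3 : ℝ} (hm : 0 < m) (hr : 0 < r)
    (h1 : 0 < I1) (h2 : 0 < I2) (h3 : 0 < I3) (γ : R3) : IsUnit (G1 m r I1 I2 I3 γ) := by
  have hc : 0 < m * r ^ 2 := by positivity
  have hd := sherman_denom_pos hc h1 h2 h3 γ
  have hdet : (G1 m r I1 I2 I3 γ).det = I1 * I2 * I3 *
      (1 + m * r ^ 2 * (γ 0 ^ 2 / I1 + γ 1 ^ 2 / I2 + γ 2 ^ 2 / I3)) := by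
    simp [G1, Matrix.det_fin_three, Matrix.vecMulVec_apply]
    field_simp
    ring
  rw [Matrix.isUnit_iff_isUnit_det, hdet]
  exact (by positivity : I1 * I2 * I3 *
    (1 + m * r ^ 2 * (γ 0 ^ 2 / I1 + γ 1 ^ 2 / I2 + γ 2 ^ 2 / I3)) ≠ 0).isUnit

lemma G1_mulVec_apply (m r I1 I2 I3 : ℝ) (γ w : R3) (i : Fin 3) :
    (G1 m r I1 I2 I3 γ *ᵥ w) i =
      ![I1, I2, I3] i * w i + m * r ^ 2 * (γ 0 * w 0 + γ 1 * w 1 + γ 2 * w 2) * γ i := by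
  simp only [G1, Matrix.add_mulVec, Matrix.mulVec_diagonal, Matrix.smul_mulVec,
    Matrix.vecMulVec_mulVec, Pi.add_apply, Pi.smul_apply, smul_eq_mul, MulOpposite.smul_eq_mul_unop,
    MulOpposite.unop_op, dotProduct, Fin.sum_univ_three]
  ring

lemma G1_mulVec_OmgR1 {m r I1 I2 I3 : ℝ} (hm : 0 < m) (hr : 0 < r)
    (h1 : 0 < I1) (h2 : 0 < I2) (h3 : 0 < I3) (p : R3 × R3) :
    G1 m r I1 I2 I3 p.1 *ᵥ OmgR1 m r I1 I2 I3 p = p.2 := by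
  have hu := (Matrix.isUnit_iff_isUnit_det _).1 (isUnit_G1 hm hr h1 h2 h3 p.1)
  rw [OmgR1, Matrix.mulVec_mulVec, Matrix.mul_nonsing_inv _ hu, Matrix.one_mulVec]

/-- The Sherman–Morrison formula for `G₁(γ)⁻¹ K`. -/
lemma OmgR1_apply {m r I1 I2 I3 : ℝ} (hm : 0 < m) (hr : 0 < r)
    (h1 : 0 < I1) (h2 : 0 < I2) (h3 : 0 < I3) (p : R3 × R3) (i : Fin 3) :
    OmgR1 m r I1 I2 I3 p i =
      (p.2 i - m * r ^ 2 * ((p.1 0 * p.2 0 / I1 + p.1 1 * p.2 1 / I2 + p.1 2 * p.2 2 / I3) /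
        (1 + m * r ^ 2 * (p.1 0 ^ 2 / I1 + p.1 1 ^ 2 / I2 + p.1 2 ^ 2 / I3))) * p.1 i) /
        ![I1, I2, I3] i := by
  have hc : 0 < m * r ^ 2 := by positivity
  have hd := sherman_denom_pos hc h1 h2 h3 p.1
  set d := 1 + m * r ^ 2 * (p.1 0 ^ 2 / I1 + p.1 1 ^ 2 / I2 + p.1 2 ^ 2 / I3) with hd_def
  have hG := fun i => (G1_mulVec_apply m r I1 I2 I3 p.1 (OmgR1 m r I1 I2 I3 p) i).symm.trans
    (congrFun (G1_mulVec_OmgR1 hm hr h1 h2 h3 p) i)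
  set w := OmgR1 m r I1 I2 I3 p
  have e0 := hG 0
  have e1 := hG 1
  have e2 := hG 2
  simp only [Matrix.cons_val] at e0 e1 e2
  -- Pairing `G₁ Ω = K` with `𝕀⁻¹ γ` determines the scalar `γ·Ω`.
  have hs : (p.1 0 * p.2 0 / I1 + p.1 1 * p.2 1 / I2 + p.1 2 * p.2 2 / I3) / d =
      p.1 0 * w 0 + p.1 1 * w 1 + p.1 2 * w 2 := by
    rw [div_eq_iff hd.ne', hd_def, ← e0, ← e1, ← e2]
    field_simp
    ring
  have hI : ![I1, I2, I3] i ≠ 0 := by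
    fin_cases i
    exacts [h1.ne', h2.ne', h3.ne']
  rw [hs, eq_div_iff hI, ← hG i]
  ring

lemma differentiable_OmgR1_apply {m r I1 I2 I3 : ℝ} (hm : 0 < m) (hr : 0 < r)
    (h1 : 0 < I1) (h2 : 0 < I2) (h3 : 0 < I3) (i : Fin 3) :
    Differentiable ℝ (fun p => OmgR1 m r I1 I2 I3 p i) := by
  have hc : 0 < m * r ^ 2 := by positivity
  have hd : ∀ p : R3 × R3,
      1 + m * r ^ 2 * (p.1 0 ^ 2 / I1 + p.1 1 ^ 2 / I2 + p.1 2 ^ 2 / I3) ≠ 0 :=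
    fun p => (sherman_denom_pos hc h1 h2 h3 p.1).ne'
  simp only [OmgR1_apply hm hr h1 h2 h3, div_eq_mul_inv _ (![I1, I2, I3] i)]
  fun_prop (disch := exact hd)

/-- `dH(v, k) = Ω·k - m r² (Ω·γ) (Ω·v)`. -/
lemma fderiv_HredR1 {m r I1 I2 I3 : ℝ} (hm : 0 < m) (hr : 0 < r)
    (h1 : 0 < I1) (h2 : 0 < I2) (h3 : 0 < I3) (p q : R3 × R3) :
    fderiv ℝ (HredR1 m r I1 I2 I3) p q =
      OmgR1 m r I1 I2 I3 p ⬝ᵥ q.2 -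
        m * r ^ 2 * (OmgR1 m r I1 I2 I3 p ⬝ᵥ p.1) * (OmgR1 m r I1 I2 I3 p ⬝ᵥ q.1) := by
  have hΩ := differentiable_OmgR1_apply hm hr h1 h2 h3
  have hH : Differentiable ℝ (HredR1 m r I1 I2 I3) := by
    unfold HredR1
    simp only [dotProduct, Fin.sum_univ_three]
    have hp : ∀ i, Differentiable ℝ (fun p : R3 × R3 => p.2 i) := fun i => by fun_prop
    exact ((((hp 0).mul (hΩ 0)).add ((hp 1).mul (hΩ 1))).add ((hp 2).mul (hΩ 2))).const_mul _
  have hline : HasDerivAt (fun t : ℝ => p + t • q) q 0 := by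
    simpa using ((hasDerivAt_id (0 : ℝ)).smul_const q).const_add p
  have along : ∀ g : R3 × R3 → ℝ, Differentiable ℝ g →
      HasDerivAt (fun t : ℝ => g (p + t • q)) (fderiv ℝ g p q) 0 := by
    intro g hg
    have hg' : HasFDerivAt g (fderiv ℝ g p) (p + (0 : ℝ) • q) := by
      simpa using (hg p).hasFDerivAt
    exact hg'.comp_hasDerivAt 0 hline
  have hw := fun i => along _ (hΩ i)
  have hγ : ∀ i, HasDerivAt (fun t : ℝ => (p + t • q).1 i) (q.1 i) 0 := fun i => by
    simpa using ((hasDerivAt_id (0 : ℝ)).mul_const (q.1 i)).const_add (p.1 i)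
  have hK : ∀ i, HasDerivAt (fun t : ℝ => (p + t • q).2 i) (q.2 i) 0 := fun i => by
    simpa using ((hasDerivAt_id (0 : ℝ)).mul_const (q.2 i)).const_add (p.2 i)
  have hG := fun (p : R3 × R3) i =>
    (G1_mulVec_apply m r I1 I2 I3 p.1 (OmgR1 m r I1 I2 I3 p) i).symm.trans
      (congrFun (G1_mulVec_OmgR1 hm hr h1 h2 h3 p) i)
  -- The derivative of `G₁(γ) Ω = K` along the line, component by component.
  have hD := fun i => HasDerivAt.unique (((hw i).const_mul (![I1, I2, I3] i)).add
    ((((((hγ 0).mul (hw 0)).add ((hγ 1).mul (hw 1))).add ((hγ 2).mul (hw 2))).const_mul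
      (m * r ^ 2)).mul (hγ i)))
    ((hK i).congr_of_eventuallyEq (Filter.Eventually.of_forall fun t => hG (p + t • q) i))
  have hHd := HasDerivAt.unique (along _ hH)
    ((((((hK 0).mul (hw 0)).add ((hK 1).mul (hw 1))).add ((hK 2).mul (hw 2))).const_mul
      (1 / 2 : ℝ)).congr_of_eventuallyEq (Filter.Eventually.of_forall fun t => by
        simp [HredR1, dotProduct, Fin.sum_univ_three]))
  have d0 := hD 0
  have d1 := hD 1
  have d2 := hD 2
  have e0 := hG p 0
  have e1 := hG p 1
  have e2 := hG p 2
  simp only [zero_smul, add_zero, Matrix.cons_val, Pi.add_apply, Pi.mul_apply]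
    at d0 d1 d2 e0 e1 e2 hHd
  rw [hHd, ← e0, ← e1, ← e2]
  simp only [dotProduct, Fin.sum_univ_three]
  linear_combination (1 / 2 : ℝ) * (OmgR1 m r I1 I2 I3 p 0 * d0 + OmgR1 m r I1 I2 I3 p 1 * d1 +
    OmgR1 m r I1 I2 I3 p 2 * d2)

lemma gradK_HredR1 {m r I1 I2 I3 : ℝ} (hm : 0 < m) (hr : 0 < r)
    (h1 : 0 < I1) (h2 : 0 < I2) (h3 : 0 < I3) (p : R3 × R3) :
    gradK (HredR1 m r I1 I2 I3) p = OmgR1 m r I1 I2 I3 p := by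
  ext i
  simp [gradK, fderiv_HredR1 hm hr h1 h2 h3]

lemma gradG_HredR1 {m r I1 I2 I3 : ℝ} (hm : 0 < m) (hr : 0 < r)
    (h1 : 0 < I1) (h2 : 0 < I2) (h3 : 0 < I3) (p : R3 × R3) :
    gradG (HredR1 m r I1 I2 I3) p =
      -(m * r ^ 2 * (OmgR1 m r I1 I2 I3 p ⬝ᵥ p.1)) • OmgR1 m r I1 I2 I3 p := by
  ext i
  simp [gradG, fderiv_HredR1 hm hr h1 h2 h3]

/-- The bracket `{f, g}_a` is the derivative of `f` along the Hamiltonian vector field of `g`. -/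
lemma nhBracket_eq_hamVF (a : R3 × R3 → R3) (f g : R3 × R3 → ℝ) (p : R3 × R3) :
    nhBracket a f g p = gradG f p ⬝ᵥ (hamVF a g p).1 + gradK f p ⬝ᵥ (hamVF a g p).2 := by
  simp only [nhBracket, hamVF, cross_apply, dotProduct, Fin.sum_univ_three, Pi.add_apply,
    Pi.sub_apply, Matrix.cons_val]
  ring

lemma hamVF_aR1 {m r I1 I2 I3 : ℝ} (hm : 0 < m) (hr : 0 < r)
    (h1 : 0 < I1) (h2 : 0 < I2) (h3 : 0 < I3) (p : R3 × R3) :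
    hamVF (aR1 m r I1 I2 I3) (HredR1 m r I1 I2 I3) p =
      (crossProduct p.1 (OmgR1 m r I1 I2 I3 p), crossProduct p.2 (OmgR1 m r I1 I2 I3 p)) := by
  simp [hamVF, gradK_HredR1 hm hr h1 h2 h3, gradG_HredR1 hm hr h1 h2 h3, aR1]

lemma hamVF_aR1' {m r I1 I2 I3 : ℝ} (hm : 0 < m) (hr : 0 < r)
    (h1 : 0 < I1) (h2 : 0 < I2) (h3 : 0 < I3) (p : R3 × R3) :
    hamVF (aR1' m r I1 I2 I3) (HredR1 m r I1 I2 I3) p =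
      (crossProduct p.1 (OmgR1 m r I1 I2 I3 p), crossProduct p.2 (OmgR1 m r I1 I2 I3 p)) := by
  simp [hamVF, gradK_HredR1 hm hr h1 h2 h3, gradG_HredR1 hm hr h1 h2 h3, aR1', cross_self]

/-- `G₁(γ)` is invertible for every `γ`, and both brackets `{·,·}_Rank1` and
`{·,·}'_Rank1` define the reduced equations of motion: for every smooth `f`,
`{f,H} = (∂f/∂γ)·(γ×Ω) + (∂f/∂K)·(K×Ω)`; equivalently, the Hamiltonian vector
field of `H` for either bracket is `(γ×Ω, K×Ω)`. -/
theorem stmt19 (m r I1 I2 I3 : ℝ) (hm : 0 < m) (hr : 0 < r)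
    (h1 : 0 < I1) (h2 : 0 < I2) (h3 : 0 < I3) :
    (∀ γ : R3, IsUnit (G1 m r I1 I2 I3 γ)) ∧
    (∀ f : R3 × R3 → ℝ, ContDiff ℝ (⊤ : ℕ∞) f → ∀ p : R3 × R3,
      nhBracket (aR1 m r I1 I2 I3) f (HredR1 m r I1 I2 I3) p =
        gradG f p ⬝ᵥ crossProduct p.1 (OmgR1 m r I1 I2 I3 p) +
        gradK f p ⬝ᵥ crossProduct p.2 (OmgR1 m r I1 I2 I3 p) ∧
      nhBracket (aR1' m r I1 I2 I3) f (HredR1 m r I1 I2 I3) p =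
        gradG f p ⬝ᵥ crossProduct p.1 (OmgR1 m r I1 I2 I3 p) +
        gradK f p ⬝ᵥ crossProduct p.2 (OmgR1 m r I1 I2 I3 p)) ∧
    (∀ p : R3 × R3,
      hamVF (aR1 m r I1 I2 I3) (HredR1 m r I1 I2 I3) p =
        (crossProduct p.1 (OmgR1 m r I1 I2 I3 p),
         crossProduct p.2 (OmgR1 m r I1 I2 I3 p)) ∧
      hamVF (aR1' m r I1 I2 I3) (HredR1 m r I1 I2 I3) p =
        (crossProduct p.1 (OmgR1 m r I1 I2 I3 p),
         crossProduct p.2 (OmgR1 m r I1 I2 I3 p))) := by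
  refine ⟨isUnit_G1 hm hr h1 h2 h3, fun f _ p => ⟨?_, ?_⟩, fun p =>
    ⟨hamVF_aR1 hm hr h1 h2 h3 p, hamVF_aR1' hm hr h1 h2 h3 p⟩⟩
  · rw [nhBracket_eq_hamVF, hamVF_aR1 hm hr h1 h2 h3]
  · rw [nhBracket_eq_hamVF, hamVF_aR1' hm hr h1 h2 h3]

end
end
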